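/- For every x with 0 < x ≤ L, the partial derivative θ_x(x,t) tends to 0 as t → ∞. -/

import Mathlib

/-!
Poisson's integral `J₁ z = (z / π) ∫₀^π cos (z sin θ) cos² θ dθ`, obtained by integrating the cosine
series termwise against the Wallis integrals, gives continuity of `J₁` and the global bound
`|J₁ z| ≤ |z|` for real `z`. Because of this bound the factor `1 / √(t - y)` in the kernel `K` is
cancelled, and the weight multiplying the Gaussian is at most `2 √(b t) exp (-min a β * t)`.

For `|x| ≥ d > 0` the Gaussian `exp (-x² / (4 ε s))` is at most `4 ε s / d²` and is Lipschitz in `x`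
with constant `16 ε s / d³`. For `y` within `x / 2` of `x`, where `0 < x ≤ L`, the translates
`y + 2 n L` stay at distance at least `(x / 4) (|n| + 1)` from `0`, on the same side as `x + 2 n L`.
Hence the series for `θ` converges near `x`, and `θ(·, t)` satisfies a Lipschitz estimate at `x` whose
constant is a polynomially growing factor times `exp (-min a β * t)`. A Lipschitz estimate at a point
bounds the derivative there, so `θ_x(x, t) → 0`.
-/

open Real MeasureTheory Set Filter Topology intervalIntegral

/-- Bessel function of the first kind of order 1, via its power series. -/
noncomputable def J1 (z : ℝ) : ℝ :=
  ∑' k : ℕ, ((-1 : ℝ) ^ k / ((Nat.factorial k : ℝ) * (Nat.factorial (k + 1) : ℝ)))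
      * (z / 2) ^ (2 * k + 1)

/-- The fundamental solution `K(x,t)` of the integro-differential operator. -/
noncomputable def Kfun (ε a b β : ℝ) (x t : ℝ) : ℝ :=
  (1 / (2 * Real.sqrt (Real.pi * ε))) *
    (Real.exp (-(|x| / Real.sqrt ε) ^ 2 / (4 * t) - a * t) / Real.sqrt t
      - b * ∫ y in (0:ℝ)..t,
          (Real.exp (-(|x| / Real.sqrt ε) ^ 2 / (4 * y) - a * y) / Real.sqrt (t - y))
            * Real.exp (-β * (t - y)) * J1 (2 * Real.sqrt (b * y * (t - y))))

/-- The theta function `θ(x,t) = Σ_{n ∈ ℤ} K(x + 2nL, t)`. -/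
noncomputable def theta (ε a b β L : ℝ) (x t : ℝ) : ℝ :=
  ∑' n : ℤ, Kfun ε a b β (x + 2 * (n : ℝ) * L) t

/-- The partial derivative of `θ` with respect to `x`. -/
noncomputable def thetaX (ε a b β L : ℝ) (x t : ℝ) : ℝ :=
  deriv (fun y : ℝ => theta ε a b β L y t) x

/-! ### The Bessel function -/

/-- The Wallis-type integral behind the Poisson representation of `J1`. -/
lemma wallis_cos_sq (k : ℕ) :
    ∫ θ in (0:ℝ)..π, sin θ ^ (2 * k) * cos θ ^ 2
      = π / 2 * ((2 * k).factorial / (4 ^ k * k.factorial * (k + 1).factorial)) := by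
  have hW : ∀ n : ℕ, ∫ θ in (0:ℝ)..π, sin θ ^ (2 * n)
      = π * ((2 * n).factorial / (4 ^ n * n.factorial ^ 2)) := by
    intro n
    rw [integral_sin_pow_even]
    congr 1
    induction n with
    | zero => simp
    | succ m ih =>
      rw [Finset.prod_range_succ, ih, show 2 * (m + 1) = 2 * m + 1 + 1 by ring,
        Nat.factorial_succ (2 * m + 1), Nat.factorial_succ (2 * m), Nat.factorial_succ m]
      have := Nat.factorial_pos m
      push_cast
      field_simp
      ring
  have h1 : ∀ θ : ℝ, sin θ ^ (2 * k) * cos θ ^ 2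
      = sin θ ^ (2 * k) - sin θ ^ (2 * (k + 1)) := by
    intro θ
    rw [cos_sq']
    ring
  simp_rw [h1]
  rw [intervalIntegral.integral_sub, hW, hW, show 2 * (k + 1) = 2 * k + 1 + 1 by ring,
    Nat.factorial_succ (2 * k + 1), Nat.factorial_succ (2 * k), Nat.factorial_succ k]
  · have := Nat.factorial_pos k
    push_cast
    field_simp
    ring
  · exact Continuous.intervalIntegrable (by fun_prop) _ _
  · exact Continuous.intervalIntegrable (by fun_prop) _ _

/-- Poisson's integral representation of `J1`. -/
lemma J1_eq_integral (z : ℝ) :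
    J1 z = z / π * ∫ θ in (0:ℝ)..π, cos (z * sin θ) * cos θ ^ 2 := by
  have hs : HasSum (fun k : ℕ => ∫ θ in (0:ℝ)..π,
      (-1) ^ k * (z * sin θ) ^ (2 * k) / ((2 * k).factorial : ℝ) * cos θ ^ 2)
      (∫ θ in (0:ℝ)..π, cos (z * sin θ) * cos θ ^ 2) := by
    have hsum : Summable fun k : ℕ => |z| ^ (2 * k) / ((2 * k).factorial : ℝ) :=
      (Real.summable_pow_div_factorial |z|).comp_injective
        (i := fun k : ℕ => 2 * k) (fun m n h => by simpa using h)
    refine intervalIntegral.hasSum_integral_of_dominated_convergence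
      (fun k _ => |z| ^ (2 * k) / ((2 * k).factorial : ℝ)) ?_ ?_ ?_ ?_ ?_
    · intro k
      exact Continuous.aestronglyMeasurable (by fun_prop)
    · intro k
      refine Eventually.of_forall fun θ _ => ?_
      have h1 : |sin θ| ^ (2 * k) ≤ 1 := pow_le_one₀ (abs_nonneg _) (abs_sin_le_one θ)
      have h2 : |cos θ| ^ 2 ≤ 1 := pow_le_one₀ (abs_nonneg _) (abs_cos_le_one θ)
      rw [norm_eq_abs, abs_mul, abs_div, abs_mul, abs_pow, abs_pow, abs_pow, abs_mul, mul_pow,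
        abs_neg, abs_one, one_pow, one_mul, Nat.abs_cast]
      calc |z| ^ (2 * k) * |sin θ| ^ (2 * k) / ((2 * k).factorial : ℝ) * |cos θ| ^ 2
          ≤ |z| ^ (2 * k) * 1 / ((2 * k).factorial : ℝ) * 1 := by gcongr
        _ = _ := by ring
    · exact Eventually.of_forall fun θ _ => hsum
    · exact intervalIntegrable_const
    · exact Eventually.of_forall fun θ _ => (Real.hasSum_cos (z * sin θ)).mul_right _
  rw [← (hs.mul_left (z / π)).tsum_eq, J1]
  refine tsum_congr fun k => ?_
  have e : ∀ θ : ℝ, (-1) ^ k * (z * sin θ) ^ (2 * k) / ((2 * k).factorial : ℝ) * cos θ ^ 2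
      = ((-1) ^ k * z ^ (2 * k) / ((2 * k).factorial : ℝ))
        * (sin θ ^ (2 * k) * cos θ ^ 2) := by
    intro θ
    rw [mul_pow]
    ring
  simp_rw [e]
  rw [intervalIntegral.integral_const_mul, wallis_cos_sq, div_pow, pow_succ 2, pow_mul 2]
  have h1 := Nat.factorial_pos k
  have h2 := Nat.factorial_pos (k + 1)
  have h3 := Nat.factorial_pos (2 * k)
  have := Real.pi_pos
  norm_num
  field_simp
  ring

lemma J1_continuous : Continuous J1 := by
  have h : J1 = fun z => z / π * ∫ θ in (0:ℝ)..π, cos (z * sin θ) * cos θ ^ 2 :=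
    funext J1_eq_integral
  rw [h]
  refine Continuous.mul (by fun_prop) ?_
  exact intervalIntegral.continuous_parametric_intervalIntegral_of_continuous' (by fun_prop) _ _

lemma abs_J1_le (z : ℝ) : |J1 z| ≤ |z| := by
  have hpi := Real.pi_pos
  have h : ‖∫ θ in (0:ℝ)..π, cos (z * sin θ) * cos θ ^ 2‖ ≤ 1 * |π - 0| := by
    refine intervalIntegral.norm_integral_le_of_norm_le_const fun θ _ => ?_
    rw [norm_mul, norm_pow]
    exact mul_le_one₀ (abs_cos_le_one _) (by positivity)
      (pow_le_one₀ (norm_nonneg _) (abs_cos_le_one _))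
  rw [sub_zero, abs_of_pos hpi, one_mul, norm_eq_abs] at h
  rw [J1_eq_integral, abs_mul, abs_div, abs_of_pos hpi]
  calc |z| / π * |∫ θ in (0:ℝ)..π, cos (z * sin θ) * cos θ ^ 2| ≤ |z| / π * π := by gcongr
    _ = |z| := by field_simp

/-! ### The kernel as a weighted integral -/

/-- The weight against which `s ↦ exp (-x² / (4 ε s))` is integrated in `Kfun`. -/
noncomputable def wt (a b β t s : ℝ) : ℝ :=
  exp (-a * s) / √(t - s) * exp (-β * (t - s)) * J1 (2 * √(b * s * (t - s)))

/-- The functional of the time profile `F` that yields `Kfun` when `F` is a Gaussian. -/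
noncomputable def Kop (ε a b β t : ℝ) (F : ℝ → ℝ) : ℝ :=
  (1 / (2 * √(π * ε))) * (F t * (exp (-a * t) / √t) - b * ∫ s in (0:ℝ)..t, F s * wt a b β t s)

/-- The Gaussian factor `exp (-r² / (4 s))` with `r = |x| / √ε`. At `s = 0` it is `1`. -/
noncomputable def gE (ε x s : ℝ) : ℝ := exp (-(|x| / √ε) ^ 2 / (4 * s))

/-- The bound for the functional `Kop` on profiles bounded by `1`. -/
noncomputable def Kbd (ε a b β t : ℝ) : ℝ :=
  (1 / (2 * √(π * ε))) * (exp (-a * t) / √t + b * (2 * √(b * t) * exp (-min a β * t)) * t)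

lemma Kfun_eq (ε a b β x t : ℝ) : Kfun ε a b β x t = Kop ε a b β t (gE ε x) := by
  unfold Kfun Kop gE wt
  congr 3
  · rw [sub_eq_add_neg, exp_add, neg_mul, mul_div_assoc]
  · congr 1
    funext y
    rw [sub_eq_add_neg, exp_add, neg_mul]
    ring

lemma wt_measurable (a b β t : ℝ) : Measurable (wt a b β t) := by
  have := J1_continuous.measurable
  unfold wt
  fun_prop

lemma gE_measurable (ε x : ℝ) : Measurable (gE ε x) := by
  unfold gE
  fun_prop

lemma abs_wt_le {a b β t s : ℝ} (hb : 0 < b) (hs : s ∈ Set.Ioc 0 t) :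
    |wt a b β t s| ≤ 2 * √(b * t) * exp (-min a β * t) := by
  obtain ⟨h0, ht⟩ := hs
  have hexp : exp (-a * s) * exp (-β * (t - s)) ≤ exp (-min a β * t) := by
    rw [← exp_add]
    apply exp_le_exp.mpr
    nlinarith [mul_le_mul_of_nonneg_right (min_le_left a β) h0.le,
      mul_le_mul_of_nonneg_right (min_le_right a β) (sub_nonneg.mpr ht)]
  have hJ : |J1 (2 * √(b * s * (t - s)))| ≤ 2 * (√(b * s) * √(t - s)) := by
    refine (abs_J1_le _).trans_eq ?_
    rw [Real.sqrt_mul (by positivity), abs_of_nonneg (by positivity)]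
  have hsq : √(b * s) ≤ √(b * t) := Real.sqrt_le_sqrt (by gcongr)
  -- Equality fails only at `s = t`, where the left side is `0` since `1 / 0 = 0`.
  have hq : (√(t - s))⁻¹ * √(t - s) ≤ 1 := inv_mul_le_one
  unfold wt
  rw [abs_mul, abs_mul, abs_div, abs_of_pos (exp_pos _), abs_of_pos (exp_pos _),
    abs_of_nonneg (Real.sqrt_nonneg _)]
  calc exp (-a * s) / √(t - s) * exp (-β * (t - s)) * |J1 (2 * √(b * s * (t - s)))|
      ≤ exp (-a * s) / √(t - s) * exp (-β * (t - s)) * (2 * (√(b * s) * √(t - s))) := by gcongr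
    _ = (exp (-a * s) * exp (-β * (t - s))) * (2 * √(b * s)) * ((√(t - s))⁻¹ * √(t - s)) := by
        ring
    _ ≤ exp (-min a β * t) * (2 * √(b * t)) * 1 := by gcongr
    _ = _ := by ring

lemma abs_Kop_le {ε a b β t M : ℝ} (hb : 0 < b) (ht : 0 < t) {F : ℝ → ℝ}
    (hF : ∀ s ∈ Set.Ioc 0 t, |F s| ≤ M) : |Kop ε a b β t F| ≤ M * Kbd ε a b β t := by
  have hM : 0 ≤ M := (abs_nonneg _).trans (hF t ⟨ht, le_rfl⟩)
  have hI : ‖∫ s in (0:ℝ)..t, F s * wt a b β t s‖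
      ≤ M * (2 * √(b * t) * exp (-min a β * t)) * |t - 0| := by
    refine intervalIntegral.norm_integral_le_of_norm_le_const fun s hs => ?_
    rw [Set.uIoc_of_le ht.le] at hs
    rw [norm_mul]
    exact mul_le_mul (hF s hs) (abs_wt_le hb hs) (norm_nonneg _) hM
  rw [sub_zero, abs_of_pos ht, norm_eq_abs] at hI
  unfold Kop Kbd
  rw [abs_mul, abs_of_nonneg (by positivity : 0 ≤ 1 / (2 * √(π * ε)))]
  calc 1 / (2 * √(π * ε)) * |F t * (exp (-a * t) / √t) - b * ∫ s in (0:ℝ)..t, F s * wt a b β t s|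
      ≤ 1 / (2 * √(π * ε)) * (M * (exp (-a * t) / √t)
        + b * (M * (2 * √(b * t) * exp (-min a β * t)) * t)) := by
        gcongr
        refine (abs_sub _ _).trans ?_
        rw [abs_mul, abs_mul, abs_of_pos hb,
          abs_of_nonneg (by positivity : 0 ≤ exp (-a * t) / √t)]
        gcongr
        exact hF t ⟨ht, le_rfl⟩
    _ = _ := by ring

lemma Kop_sub {ε a b β t : ℝ} (hb : 0 < b) (ht : 0 < t) (x y : ℝ) :
    Kop ε a b β t (gE ε x) - Kop ε a b β t (gE ε y)
      = Kop ε a b β t (fun s => gE ε x s - gE ε y s) := by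
  have hint : ∀ z, IntervalIntegrable (fun s => gE ε z s * wt a b β t s) volume 0 t := by
    intro z
    rw [intervalIntegrable_iff, Set.uIoc_of_le ht.le]
    refine Measure.integrableOn_of_bounded (M := 1 * (2 * √(b * t) * exp (-min a β * t)))
      (by simp) ((gE_measurable ε z).mul (wt_measurable a b β t)).aestronglyMeasurable ?_
    rw [ae_restrict_iff' measurableSet_Ioc]
    refine Eventually.of_forall fun s hs => ?_
    rw [norm_mul]
    refine mul_le_mul ?_ (abs_wt_le hb hs) (norm_nonneg _) zero_le_one
    rw [norm_eq_abs, gE, abs_of_pos (exp_pos _), exp_le_one_iff]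
    have := hs.1
    exact div_nonpos_of_nonpos_of_nonneg (neg_nonpos.mpr (sq_nonneg _)) (by positivity)
  unfold Kop
  simp_rw [sub_mul]
  rw [intervalIntegral.integral_sub (hint x) (hint y)]
  ring

/-! ### Gaussian estimates away from the origin -/

lemma gE_eq {ε : ℝ} (hε : 0 < ε) (x s : ℝ) : gE ε x s = exp (-(1 / (4 * ε * s) * x ^ 2)) := by
  unfold gE
  rw [div_pow, sq_abs, Real.sq_sqrt hε.le]
  congr 1
  by_cases hs : s = 0
  · simp [hs]
  · field_simp

lemma gE_le {ε d x s : ℝ} (hε : 0 < ε) (hd : 0 < d) (hx : d ≤ |x|) (hs : 0 < s) :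
    |gE ε x s| ≤ 4 * ε * s / d ^ 2 := by
  rw [gE_eq hε, abs_of_pos (exp_pos _), exp_neg]
  have h2 : d ^ 2 ≤ x ^ 2 := by rw [← sq_abs x]; gcongr
  have h3 := add_one_le_exp (1 / (4 * ε * s) * x ^ 2)
  have h4 : 1 / (4 * ε * s) * d ^ 2 ≤ 1 / (4 * ε * s) * x ^ 2 := by gcongr
  have h5 : 1 / (4 * ε * s) * d ^ 2 ≤ exp (1 / (4 * ε * s) * x ^ 2) := by linarith
  calc (exp (1 / (4 * ε * s) * x ^ 2))⁻¹ ≤ (1 / (4 * ε * s) * d ^ 2)⁻¹ :=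
        inv_anti₀ (by positivity) h5
    _ = _ := by field_simp

lemma exp_neg_mul_sq_lipschitz {k d x y : ℝ} (hk : 0 < k) (hd : 0 < d) (hx : d ≤ x) (hy : d ≤ y) :
    |exp (-(k * y ^ 2)) - exp (-(k * x ^ 2))| ≤ 4 / (k * d ^ 3) * |y - x| := by
  have hder : ∀ u ∈ Set.Ici d, HasDerivWithinAt (fun u : ℝ => exp (-(k * u ^ 2)))
      (exp (-(k * u ^ 2)) * (-(k * (2 * u)))) (Set.Ici d) u := by
    intro u _
    have := (((hasDerivAt_pow 2 u).const_mul k).neg.exp).hasDerivWithinAt (s := Set.Ici d)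
    simpa using this
  refine (convex_Ici d).norm_image_sub_le_of_norm_hasDerivWithin_le hder ?_ hx hy
  intro u hu
  have hu' : d ≤ u := hu
  have hu0 : 0 < u := hd.trans_le hu'
  rw [norm_mul, norm_neg, norm_eq_abs, norm_eq_abs, abs_of_pos (exp_pos _),
    abs_of_pos (by positivity), exp_neg]
  -- `exp q ≥ q² / 2` turns the derivative bound into one decaying like `u⁻³`.
  have h1 := quadratic_le_exp_of_nonneg (x := k * u ^ 2) (by positivity)
  have h2 : (k * u ^ 2) ^ 2 / 2 ≤ exp (k * u ^ 2) := by
    have : 0 ≤ k * u ^ 2 := by positivity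
    linarith
  calc (exp (k * u ^ 2))⁻¹ * (k * (2 * u)) ≤ ((k * u ^ 2) ^ 2 / 2)⁻¹ * (k * (2 * u)) := by
        gcongr
    _ = 4 / (k * u ^ 3) := by field_simp; norm_num
    _ ≤ 4 / (k * d ^ 3) := by gcongr

lemma gE_sub_le {ε d x y s : ℝ} (hε : 0 < ε) (hd : 0 < d) (hs : 0 < s)
    (hxy : (d ≤ x ∧ d ≤ y) ∨ (x ≤ -d ∧ y ≤ -d)) :
    |gE ε y s - gE ε x s| ≤ 16 * ε * s / d ^ 3 * |y - x| := by
  have hk : 0 < 1 / (4 * ε * s) := by positivity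
  have hc : 4 / (1 / (4 * ε * s) * d ^ 3) = 16 * ε * s / d ^ 3 := by field_simp; norm_num
  rw [gE_eq hε, gE_eq hε, ← hc]
  rcases hxy with ⟨h1, h2⟩ | ⟨h1, h2⟩
  · exact exp_neg_mul_sq_lipschitz hk hd h1 h2
  · have := exp_neg_mul_sq_lipschitz hk hd (x := -x) (y := -y) (by linarith) (by linarith)
    rwa [neg_sq, neg_sq, show -y - -x = -(y - x) by ring, abs_neg] at this

/-! ### Summation over the translates -/

lemma summable_inv_dist_pow (c : ℝ) (p : ℕ) (hp : 2 ≤ p) :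
    Summable fun n : ℤ => 1 / (c * (|(n : ℝ)| + 1)) ^ p := by
  have h : Summable fun n : ℕ => 1 / (c * ((n : ℝ) + 1)) ^ p := by
    have := ((summable_nat_add_iff 1).mpr
      (Real.summable_one_div_nat_pow.mpr (by omega : 1 < p))).mul_left (1 / c ^ p)
    refine this.congr fun n => ?_
    push_cast
    rw [mul_pow]
    ring
  refine Summable.of_nat_of_neg ?_ ?_ <;> simpa using h

lemma translates_far {L x y : ℝ} (hx0 : 0 < x) (hxL : x ≤ L) (hy : |y - x| < x / 2) (n : ℤ) :
    (x / 4 * (|(n : ℝ)| + 1) ≤ x + 2 * n * L ∧ x / 4 * (|(n : ℝ)| + 1) ≤ y + 2 * n * L) ∨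
    (x + 2 * n * L ≤ -(x / 4 * (|(n : ℝ)| + 1)) ∧ y + 2 * n * L ≤ -(x / 4 * (|(n : ℝ)| + 1))) := by
  obtain ⟨h1, h2⟩ := abs_lt.mp hy
  rcases le_or_gt 0 n with hn | hn
  · left
    have hn' : (0 : ℝ) ≤ n := by exact_mod_cast hn
    rw [abs_of_nonneg hn']
    have := mul_le_mul_of_nonneg_left hxL hn'
    have := mul_nonneg hn' hx0.le
    constructor <;> nlinarith
  · right
    have hn' : (n : ℝ) ≤ -1 := by exact_mod_cast (by omega : n ≤ -1)
    rw [abs_of_nonpos (by linarith)]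
    have h3 : 0 ≤ (-1 - (n : ℝ)) * x := mul_nonneg (by linarith) hx0.le
    have h4 : 0 ≤ (-(n : ℝ)) * (L - x) := mul_nonneg (by linarith) (by linarith)
    constructor <;> nlinarith

lemma summable_Kfun {ε a b β L x y t : ℝ} (hε : 0 < ε) (hb : 0 < b) (hx0 : 0 < x) (hxL : x ≤ L)
    (hy : |y - x| < x / 2) (ht : 0 < t) :
    Summable fun n : ℤ => Kfun ε a b β (y + 2 * (n : ℝ) * L) t := by
  refine Summable.of_norm_bounded
    ((summable_inv_dist_pow (x / 4) 2 le_rfl).mul_left (4 * ε * t * Kbd ε a b β t)) fun n => ?_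
  have hd : 0 < x / 4 * (|(n : ℝ)| + 1) := by positivity
  have hfar : x / 4 * (|(n : ℝ)| + 1) ≤ |y + 2 * n * L| := by
    rcases translates_far hx0 hxL hy n with h | h
    · exact h.2.trans (le_abs_self _)
    · exact (le_neg.mpr h.2).trans (neg_le_abs _)
  rw [Kfun_eq, norm_eq_abs]
  refine (abs_Kop_le hb ht (M := 4 * ε * t / (x / 4 * (|(n : ℝ)| + 1)) ^ 2) fun s hs => ?_).trans_eq
    (by ring)
  refine (gE_le hε hd hfar hs.1).trans ?_
  have := hs.2
  gcongr

lemma abs_thetaX_le {ε a b β L x t : ℝ} (hε : 0 < ε) (hb : 0 < b) (hx0 : 0 < x) (hxL : x ≤ L)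
    (ht : 0 < t) :
    |thetaX ε a b β L x t|
      ≤ (∑' n : ℤ, 1 / (x / 4 * (|(n : ℝ)| + 1)) ^ 3) * (16 * ε * t * Kbd ε a b β t) := by
  have hK : 0 ≤ Kbd ε a b β t := by unfold Kbd; positivity
  unfold thetaX
  rw [← norm_eq_abs]
  refine norm_deriv_le_of_lip' (mul_nonneg (tsum_nonneg fun n => by positivity) (by positivity)) ?_
  filter_upwards [Metric.ball_mem_nhds x (half_pos hx0)] with y hy
  rw [Metric.mem_ball, dist_eq] at hy
  have hsy := summable_Kfun (a := a) (β := β) hε hb hx0 hxL hy ht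
  have hsx := summable_Kfun (a := a) (β := β) (y := x) hε hb hx0 hxL (by simpa using hx0) ht
  unfold theta
  rw [← hsy.tsum_sub hsx]
  have hS := (summable_inv_dist_pow (x / 4) 3 (by norm_num)).mul_right
    (16 * ε * t * Kbd ε a b β t * |y - x|)
  rw [norm_eq_abs (y - x), mul_assoc, ← tsum_mul_right]
  refine tsum_of_norm_bounded hS.hasSum fun n => ?_
  have hd : 0 < x / 4 * (|(n : ℝ)| + 1) := by positivity
  rw [Kfun_eq, Kfun_eq, Kop_sub hb ht, norm_eq_abs]
  refine (abs_Kop_le hb ht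
    (M := 16 * ε * t / (x / 4 * (|(n : ℝ)| + 1)) ^ 3 * |y - x|) fun s hs => ?_).trans_eq (by ring)
  refine (gE_sub_le hε hd hs.1 (translates_far hx0 hxL hy n)).trans ?_
  rw [add_sub_add_right_eq_sub]
  have := hs.2
  gcongr

/-! ### Decay in time -/

lemma tendsto_Kbd {ε a b β : ℝ} (ha : 0 < a) (hb : 0 < b) (hβ : 0 < β) :
    Tendsto (fun t => t * Kbd ε a b β t) atTop (𝓝 0) := by
  have hm : 0 < min a β := lt_min ha hβ
  have key : ∀ p : ℝ, Tendsto (fun t : ℝ => t ^ p * exp (-min a β * t)) atTop (𝓝 0) :=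
    fun p => tendsto_rpow_mul_exp_neg_mul_atTop_nhds_zero p _ hm
  have hlim : Tendsto (fun t : ℝ => (1 / (2 * √(π * ε))) * (t ^ (1:ℝ) * exp (-min a β * t)
      + 2 * b * (b * (t ^ (3:ℝ) * exp (-min a β * t)) + t ^ (2:ℝ) * exp (-min a β * t))))
      atTop (𝓝 0) := by
    simpa using ((key 1).add ((((key 3).const_mul b).add (key 2)).const_mul (2 * b))).const_mul
      (1 / (2 * √(π * ε)))
  refine squeeze_zero' ?_ ?_ hlim
  · filter_upwards [eventually_gt_atTop 0] with t ht
    unfold Kbd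
    positivity
  · filter_upwards [eventually_ge_atTop 1] with t ht
    have ht0 : 0 < t := by linarith
    have h1 : exp (-a * t) / √t ≤ exp (-min a β * t) := by
      refine (div_le_self (exp_pos _).le (Real.one_le_sqrt.mpr ht)).trans (exp_le_exp.mpr ?_)
      nlinarith [mul_le_mul_of_nonneg_right (min_le_left a β) ht0.le]
    have h2 : √(b * t) ≤ b * t + 1 := by
      have := Real.sq_sqrt (by positivity : 0 ≤ b * t)
      nlinarith [sq_nonneg (√(b * t) - 1), Real.sqrt_nonneg (b * t)]
    rw [Real.rpow_one, show t ^ (3:ℝ) = t ^ 3 from mod_cast Real.rpow_natCast t 3, Real.rpow_two]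
    unfold Kbd
    calc t * (1 / (2 * √(π * ε)) * (exp (-a * t) / √t
          + b * (2 * √(b * t) * exp (-min a β * t)) * t))
        ≤ t * (1 / (2 * √(π * ε)) * (exp (-min a β * t)
          + b * (2 * (b * t + 1) * exp (-min a β * t)) * t)) := by gcongr
      _ = _ := by ring

/-- for `0 < x ≤ L`, `θ_x(x,t) → 0` as `t → ∞`. -/
theorem thetaX_tendsto_zero (ε a b β L : ℝ)
    (hε : 0 < ε) (ha : 0 < a) (hb : 0 < b) (hβ : 0 < β) (hL : 0 < L)
    (x : ℝ) (hx0 : 0 < x) (hxL : x ≤ L) :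
    Filter.Tendsto (fun t : ℝ => thetaX ε a b β L x t) Filter.atTop (nhds 0) := by
  have h := ((tendsto_Kbd (ε := ε) ha hb hβ).const_mul (16 * ε)).const_mul
      (∑' n : ℤ, 1 / (x / 4 * (|(n : ℝ)| + 1)) ^ 3)
  rw [mul_zero, mul_zero] at h
  refine squeeze_zero_norm' ?_ h
  filter_upwards [eventually_gt_atTop 0] with t ht
  refine (abs_thetaX_le hε hb hx0 hxL ht).trans_eq ?_
  ring
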